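/- The constants in the two-sided comparison of φ̃ᶜ_{ℍⁿ} with T on the upper half-space are sharp: for every c > 0 and every ε > 0 there exist distinct points x, y ∈ ℍⁿ with |x−y|/(|x−y| + c(xₙ + yₙ)) < (1/(1+c) + ε)·T(x,y), and there exist distinct points x', y' ∈ ℍⁿ with |x'−y'|/(|x'−y'| + c(x'ₙ + y'ₙ)) > (max{1, 1/c} − ε)·T(x',y'). -/

import Mathlib

/-!
On a vertical line, the points at heights `1 + s` and `1 - s` satisfy `T = s` and
`φ̃ᶜ = s / (s + c)`, so the quotient `φ̃ᶜ / T` equals `1 / (s + c)`. It tends to `1 / (1 + c)` as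
`s → 1` (one point approaches the boundary) and to `1 / c` as `s → 0` (the points merge). For two
points at a fixed horizontal distance whose common height tends to `0`, the value of `φ̃ᶜ` tends to
`1`, whereas `T ≤ 1` always.
-/

open Filter Set Topology

section HalfSpace

variable {E : Type*} [NormedAddCommGroup E] [NormedSpace ℝ E] {ℓ : Module.Dual ℝ E}
  {e w : E} {a c h s : ℝ}

/-- The open half-space on which the linear functional `ℓ` is positive; `ℍⁿ` is the case of the
last coordinate on Euclidean space. The value `ℓ x` plays the role of the height `xₙ`. -/
def halfSpace (ℓ : Module.Dual ℝ E) : Set E :=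
  {x | 0 < ℓ x}

/-- The function `T` of the half-space of `ℓ`, which on `ℍⁿ` is `th (ρ / 2)` for the hyperbolic
metric `ρ`. -/
noncomputable def tanhHalfDist (ℓ : Module.Dual ℝ E) (x y : E) : ℝ :=
  dist x y / √(dist x y ^ 2 + 4 * ℓ x * ℓ y)

/-- The function `φ̃ᶜ` of the half-space of `ℓ`, with `ℓ` standing for the distance to the
boundary. -/
noncomputable def phiTilde (ℓ : Module.Dual ℝ E) (c : ℝ) (x y : E) : ℝ :=
  dist x y / (dist x y + c * (ℓ x + ℓ y))

theorem tanhHalfDist_le_one {x y : E} (hx : x ∈ halfSpace ℓ) (hy : y ∈ halfSpace ℓ) :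
    tanhHalfDist ℓ x y ≤ 1 := by
  have hxy : 0 < ℓ x * ℓ y := mul_pos hx hy
  exact div_le_one_of_le₀ (Real.le_sqrt_of_sq_le (by linarith)) (Real.sqrt_nonneg _)

theorem tanhHalfDist_pos {x y : E} (hx : x ∈ halfSpace ℓ) (hy : y ∈ halfSpace ℓ) (hxy : x ≠ y) :
    0 < tanhHalfDist ℓ x y := by
  have hdist : 0 < dist x y := dist_pos.2 hxy
  have hprod : 0 < ℓ x * ℓ y := mul_pos hx hy
  exact div_pos hdist (Real.sqrt_pos.2 (by nlinarith))

theorem smul_mem_halfSpace (hℓ : ℓ e = 1) (hh : 0 < h) : h • e ∈ halfSpace ℓ := by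
  simpa [halfSpace, hℓ] using hh

theorem dist_one_add_smul_one_sub_smul (he : ‖e‖ = 1) (hs : 0 ≤ s) :
    dist ((1 + s) • e) ((1 - s) • e) = 2 * s := by
  rw [dist_eq_norm, ← sub_smul, norm_smul, he, mul_one, Real.norm_eq_abs,
    show 1 + s - (1 - s) = 2 * s by ring, abs_of_nonneg (by positivity)]

theorem tanhHalfDist_one_add_smul_one_sub_smul (he : ‖e‖ = 1) (hℓ : ℓ e = 1) (hs : 0 ≤ s) :
    tanhHalfDist ℓ ((1 + s) • e) ((1 - s) • e) = s := by
  have hsq : (2 * s) ^ 2 + 4 * (1 + s) * (1 - s) = 2 ^ 2 := by ring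
  simp only [tanhHalfDist, dist_one_add_smul_one_sub_smul he hs, map_smul, hℓ, smul_eq_mul,
    mul_one, hsq, Real.sqrt_sq zero_le_two]
  exact mul_div_cancel_left₀ s two_ne_zero

theorem phiTilde_one_add_smul_one_sub_smul (he : ‖e‖ = 1) (hℓ : ℓ e = 1) (hs : 0 ≤ s) :
    phiTilde ℓ c ((1 + s) • e) ((1 - s) • e) = s / (s + c) := by
  have hden : 2 * s + c * (1 + s + (1 - s)) = 2 * (s + c) := by ring
  simp only [phiTilde, dist_one_add_smul_one_sub_smul he hs, map_smul, hℓ, smul_eq_mul,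
    mul_one, hden]
  exact mul_div_mul_left s (s + c) two_ne_zero

theorem phiTilde_smul_smul_add (hℓ : ℓ e = 1) (hw : ℓ w = 0) :
    phiTilde ℓ c (h • e) (h • e + w) = ‖w‖ / (‖w‖ + c * (h + h)) := by
  simp [phiTilde, hℓ, hw]

theorem exists_phiTilde_eq_mul_tanhHalfDist (he : ‖e‖ = 1) (hℓ : ℓ e = 1) (hs : s ∈ Ioo 0 1) :
    ∃ x ∈ halfSpace ℓ, ∃ y ∈ halfSpace ℓ, x ≠ y ∧
      phiTilde ℓ c x y = 1 / (s + c) * tanhHalfDist ℓ x y := by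
  refine ⟨(1 + s) • e, smul_mem_halfSpace hℓ (by linarith [hs.1]), (1 - s) • e,
    smul_mem_halfSpace hℓ (sub_pos.2 hs.2), ?_, ?_⟩
  · rw [← dist_pos, dist_one_add_smul_one_sub_smul he hs.1.le]
    exact mul_pos two_pos hs.1
  · rw [phiTilde_one_add_smul_one_sub_smul he hℓ hs.1.le,
      tanhHalfDist_one_add_smul_one_sub_smul he hℓ hs.1.le, one_div_mul_eq_div]

theorem exists_phiTilde_lt_mul_tanhHalfDist (he : ‖e‖ = 1) (hℓ : ℓ e = 1) (hc : 1 + c ≠ 0)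
    (ha : 1 / (1 + c) < a) :
    ∃ x ∈ halfSpace ℓ, ∃ y ∈ halfSpace ℓ, x ≠ y ∧
      phiTilde ℓ c x y < a * tanhHalfDist ℓ x y := by
  have hlim : Tendsto (fun s : ℝ ↦ 1 / (s + c)) (𝓝[<] 1) (𝓝 (1 / (1 + c))) :=
    tendsto_nhdsWithin_of_tendsto_nhds
      (ContinuousAt.tendsto (by fun_prop (disch := assumption)))
  obtain ⟨s, hsa, hs⟩ := ((hlim.eventually_lt_const ha).and (Ioo_mem_nhdsLT one_pos)).exists
  obtain ⟨x, hx, y, hy, hxy, heq⟩ := exists_phiTilde_eq_mul_tanhHalfDist (c := c) he hℓ hs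
  exact ⟨x, hx, y, hy, hxy, heq ▸ mul_lt_mul_of_pos_right hsa (tanhHalfDist_pos hx hy hxy)⟩

theorem exists_mul_tanhHalfDist_lt_phiTilde_of_lt_one_div (he : ‖e‖ = 1) (hℓ : ℓ e = 1)
    (hc : c ≠ 0) (ha : a < 1 / c) :
    ∃ x ∈ halfSpace ℓ, ∃ y ∈ halfSpace ℓ, x ≠ y ∧
      a * tanhHalfDist ℓ x y < phiTilde ℓ c x y := by
  have hlim : Tendsto (fun s : ℝ ↦ 1 / (s + c)) (𝓝[>] 0) (𝓝 (1 / c)) := by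
    have hcont : ContinuousAt (fun s : ℝ ↦ 1 / (s + c)) 0 := by
      fun_prop (disch := simpa using hc)
    simpa only [zero_add] using tendsto_nhdsWithin_of_tendsto_nhds hcont.tendsto
  obtain ⟨s, hsa, hs⟩ := ((hlim.eventually_const_lt ha).and (Ioo_mem_nhdsGT one_pos)).exists
  obtain ⟨x, hx, y, hy, hxy, heq⟩ := exists_phiTilde_eq_mul_tanhHalfDist (c := c) he hℓ hs
  exact ⟨x, hx, y, hy, hxy, heq ▸ mul_lt_mul_of_pos_right hsa (tanhHalfDist_pos hx hy hxy)⟩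

theorem exists_mul_tanhHalfDist_lt_phiTilde_of_lt_one (hℓ : ℓ e = 1) (hw : ℓ w = 0) (hw₀ : w ≠ 0)
    (hc : 0 ≤ c) (ha : a < 1) :
    ∃ x ∈ halfSpace ℓ, ∃ y ∈ halfSpace ℓ, x ≠ y ∧
      a * tanhHalfDist ℓ x y < phiTilde ℓ c x y := by
  have hnorm : ‖w‖ ≠ 0 := norm_ne_zero_iff.2 hw₀
  have hlim : Tendsto (fun h : ℝ ↦ ‖w‖ / (‖w‖ + c * (h + h))) (𝓝[>] 0) (𝓝 1) := by
    have hcont : ContinuousAt (fun h : ℝ ↦ ‖w‖ / (‖w‖ + c * (h + h))) 0 := by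
      fun_prop (disch := simpa using hw₀)
    simpa [hnorm] using tendsto_nhdsWithin_of_tendsto_nhds hcont.tendsto
  obtain ⟨h, hha, hh⟩ := ((hlim.eventually_const_lt ha).and self_mem_nhdsWithin).exists
  have hx : h • e ∈ halfSpace ℓ := smul_mem_halfSpace hℓ hh
  have hy : h • e + w ∈ halfSpace ℓ := by simpa [halfSpace, hw] using hx
  have hxy : h • e ≠ h • e + w := by simpa using hw₀
  refine ⟨h • e, hx, h • e + w, hy, hxy, ?_⟩
  have hφ : 0 ≤ phiTilde ℓ c (h • e) (h • e + w) :=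
    div_nonneg dist_nonneg (add_nonneg dist_nonneg (mul_nonneg hc (add_pos hx hy).le))
  calc a * tanhHalfDist ℓ (h • e) (h • e + w)
      < phiTilde ℓ c (h • e) (h • e + w) * tanhHalfDist ℓ (h • e) (h • e + w) := by
        rw [← phiTilde_smul_smul_add hℓ hw] at hha
        exact mul_lt_mul_of_pos_right hha (tanhHalfDist_pos hx hy hxy)
    _ ≤ phiTilde ℓ c (h • e) (h • e + w) :=
        mul_le_of_le_one_right hφ (tanhHalfDist_le_one hx hy)

theorem stmt12_general (he : ‖e‖ = 1) (hℓ : ℓ e = 1) (hw : ℓ w = 0) (hw₀ : w ≠ 0) (hc : 0 < c)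
    {ε : ℝ} (hε : 0 < ε) :
    (∃ x ∈ halfSpace ℓ, ∃ y ∈ halfSpace ℓ, x ≠ y ∧
      phiTilde ℓ c x y < (1 / (1 + c) + ε) * tanhHalfDist ℓ x y) ∧
    (∃ x ∈ halfSpace ℓ, ∃ y ∈ halfSpace ℓ, x ≠ y ∧
      phiTilde ℓ c x y > (max 1 (1 / c) - ε) * tanhHalfDist ℓ x y) := by
  refine ⟨exists_phiTilde_lt_mul_tanhHalfDist he hℓ (by positivity) (lt_add_of_pos_right _ hε), ?_⟩
  rcases lt_max_iff.1 (sub_lt_self (max 1 (1 / c)) hε) with hlt | hlt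
  · exact exists_mul_tanhHalfDist_lt_phiTilde_of_lt_one hℓ hw hw₀ hc.le hlt
  · exact exists_mul_tanhHalfDist_lt_phiTilde_of_lt_one_div he hℓ hc.ne' hlt

end HalfSpace

theorem stmt12 (n : ℕ) (hn : 2 ≤ n) (c : ℝ) (hc : 0 < c) (ε : ℝ) (hε : 0 < ε) :
    (∃ x ∈ {p : EuclideanSpace ℝ (Fin n) | 0 < p ⟨n - 1, by omega⟩},
      ∃ y ∈ {p : EuclideanSpace ℝ (Fin n) | 0 < p ⟨n - 1, by omega⟩}, x ≠ y ∧
        dist x y / (dist x y + c * (x ⟨n - 1, by omega⟩ + y ⟨n - 1, by omega⟩)) <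
          (1 / (1 + c) + ε) *
            (dist x y /
              Real.sqrt (dist x y ^ 2 + 4 * x ⟨n - 1, by omega⟩ * y ⟨n - 1, by omega⟩))) ∧
    (∃ x ∈ {p : EuclideanSpace ℝ (Fin n) | 0 < p ⟨n - 1, by omega⟩},
      ∃ y ∈ {p : EuclideanSpace ℝ (Fin n) | 0 < p ⟨n - 1, by omega⟩}, x ≠ y ∧
        dist x y / (dist x y + c * (x ⟨n - 1, by omega⟩ + y ⟨n - 1, by omega⟩)) >
          (max 1 (1 / c) - ε) *
            (dist x y /
              Real.sqrt (dist x y ^ 2 + 4 * x ⟨n - 1, by omega⟩ * y ⟨n - 1, by omega⟩))) := by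
  have hne : n - 1 ≠ 0 := by omega
  exact stmt12_general (ℓ := (EuclideanSpace.proj (𝕜 := ℝ) (⟨n - 1, by omega⟩ : Fin n)).toLinearMap)
    (e := EuclideanSpace.single ⟨n - 1, by omega⟩ 1) (w := EuclideanSpace.single ⟨0, by omega⟩ 1)
    (by simp) (by simp) (by simp [hne]) (by simp) hc hε
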